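/- arXiv:1409.2135 — 2 statements merged into one kernel-verified Lean document; each statement's English description precedes it below -/
import Mathlib

section
/- Let 1 ≤ r ≤ s ≤ n-2 and let a_1,…,a_r,α_{r+1},…,α_s and b_1,…,b_r,β_{r+1},…,β_s be two sequences of indices in {1,…,n}, each consisting of pairwise distinct entries, such that: (i) x_{α_ℓ β_ℓ} ∈ U for r+1 ≤ ℓ ≤ s; (ii) a_i < β_j and x_{a_i β_j} ∉ D ∪ U for all 1 ≤ i ≤ r and r+1 ≤ j ≤ s; (iii) x_{α_i β_j} ∉ D ∪ U for all r+1 ≤ i < j ≤ s; (iv) the leading monomial in_≺([a_1,…,a_r | b_1,…,b_r]) is a product of variables from U. Then in_≺([a_1,…,a_r,α_{r+1},…,α_s | b_1,…,b_r,β_{r+1},…,β_s]) = in_≺([a_1,…,a_r | b_1,…,b_r]) · x_{α_{r+1} β_{r+1}} ⋯ x_{α_s β_s}. -/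
open MvPolynomial

/-- The set `D` of diagonal variables `x_{ii}` (0-indexed). -/
def Dset (n : ℕ) : Set (Sym2 (Fin n)) := {v | ∃ i : Fin n, v = s(i, i)}

/-- The set `U` of variables `x_{13}, x_{24}, …, x_{n-2,n}, x_{12}, x_{n-1,n}` (0-indexed). -/
def Uset (n : ℕ) : Set (Sym2 (Fin n)) :=
  {v | ∃ i j : Fin n, v = s(i, j) ∧
    ((j : ℕ) = (i : ℕ) + 2 ∨ ((i : ℕ) = 0 ∧ (j : ℕ) = 1) ∨
      ((i : ℕ) = n - 2 ∧ (j : ℕ) = n - 1))}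

/-- `rank` encodes the linear order on the variables described in the paper:
`x_{11} ≻ … ≻ x_{nn} ≻ x_{13} ≻ … ≻ x_{n-2,n} ≻ x_{12} ≻ x_{n-1,n} ≻ (rest)`,
where a smaller rank means a larger variable. -/
def IsGoodRank (n : ℕ) (rank : Sym2 (Fin n) → ℕ) : Prop :=
  Function.Injective rank ∧
  (∀ i : Fin n, rank s(i, i) = (i : ℕ)) ∧
  (∀ i j : Fin n, (j : ℕ) = (i : ℕ) + 2 → rank s(i, j) = n + (i : ℕ)) ∧
  (∀ i j : Fin n, (i : ℕ) = 0 → (j : ℕ) = 1 → rank s(i, j) = 2 * n - 2) ∧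
  (∀ i j : Fin n, (i : ℕ) = n - 2 → (j : ℕ) = n - 1 → rank s(i, j) = 2 * n - 1) ∧
  (∀ v : Sym2 (Fin n), v ∉ Dset n ∪ Uset n → 2 * n ≤ rank v)

/-- The degree reverse lexicographic order on exponent vectors induced by `rank`:
`a ≺ b` iff `deg a < deg b`, or the degrees agree and at the `rank`-largest (i.e. smallest)
variable where `a` and `b` differ, `a` has the larger exponent. -/
def DegRevLexLT {n : ℕ} (rank : Sym2 (Fin n) → ℕ) (a b : Sym2 (Fin n) →₀ ℕ) : Prop :=
  (a.sum fun _ e => e) < (b.sum fun _ e => e) ∨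
    ((a.sum fun _ e => e) = (b.sum fun _ e => e) ∧
      ∃ v : Sym2 (Fin n), b v < a v ∧ ∀ w : Sym2 (Fin n), rank v < rank w → a w = b w)

/-- `μ` is the leading monomial (exponent vector) of `f` w.r.t. the degrevlex order `≺`. -/
def IsLeadingMonomial {K : Type*} [Field K] {n : ℕ} (rank : Sym2 (Fin n) → ℕ)
    (f : MvPolynomial (Sym2 (Fin n)) K) (μ : Sym2 (Fin n) →₀ ℕ) : Prop :=
  μ ∈ f.support ∧ ∀ ν ∈ f.support, ν ≠ μ → DegRevLexLT rank ν μ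

/-- The minor `[a_1,…,a_s | b_1,…,b_s]` of the generic symmetric matrix `X = (x_{ij})`. -/
noncomputable def symMinor (K : Type*) [Field K] {n s : ℕ} (a b : Fin s → Fin n) :
    MvPolynomial (Sym2 (Fin n)) K :=
  Matrix.det (Matrix.of fun k l => (MvPolynomial.X s(a k, b l) : MvPolynomial (Sym2 (Fin n)) K))

/-!
For a homogeneous polynomial, deleting every term divisible by a variable outside an initial segment
`G` of the variable order does not change a degree reverse lexicographic leading monomial that
involves only variables of `G`. For `G = D ∪ U`, the hypotheses say that modulo the variables
outside `G` the large matrix is block lower triangular: its first diagonal block is the matrix of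
the small minor, its second is lower triangular with diagonal entries `x_{α_ℓ β_ℓ}`. Hence the large
minor is congruent to the small one times the product of these entries.
-/

section Determinant

variable {m R : Type*} [Fintype m] [LinearOrder m] [CommRing R] {M : Matrix m m R}
  {p : m → Prop} [DecidablePred p]

lemma det_eq_det_toSquareBlockProp_mul_prod (hp : IsLowerSet {i | p i})
    (hM : ∀ i j, i < j → ¬p j → M i j = 0) :
    M.det = (M.toSquareBlockProp p).det * ∏ i with ¬p i, M i i := by
  have corner_eq_zero (i) (hi : p i) (j) (hj : ¬p j) : M i j = 0 :=
    hM i j (lt_of_not_ge fun hji => hj (hp hji hi)) hj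
  have isLowerTriangular : (M.toSquareBlockProp fun i => ¬p i).IsLowerTriangular :=
    fun i j hij => hM i j hij j.2
  rw [Matrix.twoBlockTriangular_det' M p corner_eq_zero,
    Matrix.det_of_isLowerTriangular _ isLowerTriangular,
    Finset.prod_subtype _ (fun i => Finset.mem_filter_univ i)]
  rfl

lemma det_sub_det_toSquareBlockProp_mul_prod_mem {I : Ideal R} (hp : IsLowerSet {i | p i})
    (hM : ∀ i j, i < j → ¬p j → M i j ∈ I) :
    M.det - (M.toSquareBlockProp p).det * ∏ i with ¬p i, M i i ∈ I := by
  rw [← Ideal.Quotient.eq, map_mul, map_prod, RingHom.map_det, RingHom.map_det]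
  exact det_eq_det_toSquareBlockProp_mul_prod hp
    fun i j hij hj => Ideal.Quotient.eq_zero_iff_mem.mpr (hM i j hij hj)

end Determinant

section Polynomial

variable {σ R : Type*} [CommRing R]

lemma isHomogeneous_det {ι : Type*} [Fintype ι] [DecidableEq ι]
    {M : Matrix ι ι (MvPolynomial σ R)} {d : ℕ} (hM : ∀ i j, (M i j).IsHomogeneous d) :
    M.det.IsHomogeneous (Fintype.card ι * d) := by
  rw [Matrix.det_apply]
  refine IsHomogeneous.sum _ _ _ fun π _ => ?_
  have hprod := IsHomogeneous.prod Finset.univ (fun i => M (π i) i) _ fun i _ => hM (π i) i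
  rw [Finset.sum_const, smul_eq_mul, Finset.card_univ] at hprod
  exact (homogeneousSubmodule σ R _).toAddSubgroup.zsmul_mem hprod _

lemma coeff_eq_coeff_of_sub_mem_span_X {f g : MvPolynomial σ R} {G : Set σ}
    (hfg : f - g ∈ Ideal.span (X '' Gᶜ)) {d : σ →₀ ℕ} (hd : ↑d.support ⊆ G) :
    coeff d f = coeff d g := by
  rw [← sub_eq_zero, ← coeff_sub]
  by_contra hcoeff
  obtain ⟨v, hvG, hv⟩ := mem_ideal_span_X_image.mp hfg d (mem_support_iff.mpr hcoeff)
  exact hvG (hd (Finsupp.mem_support_iff.mpr hv))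

end Polynomial

section LeadingMonomial

variable {K : Type*} [Field K] {n : ℕ} {rank : Sym2 (Fin n) → ℕ}

lemma degRevLexLT_iff {a b : Sym2 (Fin n) →₀ ℕ} :
    DegRevLexLT rank a b ↔ a.degree < b.degree ∨
      (a.degree = b.degree ∧ ∃ v, b v < a v ∧ ∀ w, rank v < rank w → a w = b w) :=
  Iff.rfl

lemma DegRevLexLT.add_right {a b : Sym2 (Fin n) →₀ ℕ} (h : DegRevLexLT rank a b)
    (c : Sym2 (Fin n) →₀ ℕ) : DegRevLexLT rank (a + c) (b + c) := by
  simpa only [degRevLexLT_iff, map_add, Finsupp.add_apply, add_lt_add_iff_right,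
    add_left_inj] using h

lemma degRevLexLT_of_not_support_subset {G : Set (Sym2 (Fin n))}
    (hG : ∀ v ∈ G, ∀ w ∉ G, rank v < rank w) {a b : Sym2 (Fin n) →₀ ℕ}
    (hdeg : a.degree = b.degree) (ha : ¬↑a.support ⊆ G) (hb : ↑b.support ⊆ G) :
    DegRevLexLT rank a b := by
  classical
  have b_eq_zero {v} (hv : v ∉ G) : b v = 0 := Finsupp.notMem_support_iff.mp fun h => hv (hb h)
  obtain ⟨u, hu, huG⟩ := Set.not_subset.mp ha
  obtain ⟨v, hv, hmax⟩ := Finset.exists_max_image (a.support.filter (· ∉ G)) rank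
    ⟨u, Finset.mem_filter.mpr ⟨hu, huG⟩⟩
  obtain ⟨hva, hvG⟩ := Finset.mem_filter.mp hv
  refine .inr ⟨hdeg, v, ?_, fun w hvw => ?_⟩
  · rw [b_eq_zero hvG]
    exact Nat.pos_of_ne_zero (Finsupp.mem_support_iff.mp hva)
  · have hwG : w ∉ G := fun h => (hG w h v hvG).not_gt hvw
    rw [b_eq_zero hwG, ← Finsupp.notMem_support_iff]
    exact fun hwa => (hmax w (Finset.mem_filter.mpr ⟨hwa, hwG⟩)).not_gt hvw

lemma IsLeadingMonomial.mul_monomial {f : MvPolynomial (Sym2 (Fin n)) K}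
    {μ : Sym2 (Fin n) →₀ ℕ} (hμ : IsLeadingMonomial rank f μ) (δ : Sym2 (Fin n) →₀ ℕ) :
    IsLeadingMonomial rank (f * monomial δ 1) (μ + δ) := by
  refine ⟨?_, fun ν hν hne => ?_⟩
  · simpa only [mem_support_iff, coeff_mul_monomial, mul_one] using hμ.1
  · rw [mem_support_iff, coeff_mul_monomial', mul_one, ite_ne_right_iff] at hν
    obtain ⟨hle, hcoeff⟩ := hν
    obtain ⟨ν, rfl⟩ := le_iff_exists_add'.mp hle
    rw [add_tsub_cancel_right] at hcoeff
    exact (hμ.2 ν (mem_support_iff.mpr hcoeff) fun h => hne (h ▸ rfl)).add_right δ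

lemma IsLeadingMonomial.of_sub_mem_span_X {G : Set (Sym2 (Fin n))}
    (hG : ∀ v ∈ G, ∀ w ∉ G, rank v < rank w) {f g : MvPolynomial (Sym2 (Fin n)) K} {d : ℕ}
    (hf : f.IsHomogeneous d) (hfg : f - g ∈ Ideal.span (X '' Gᶜ)) {μ : Sym2 (Fin n) →₀ ℕ}
    (hμ : IsLeadingMonomial rank g μ) (hμG : ↑μ.support ⊆ G) : IsLeadingMonomial rank f μ := by
  have mem_support_iff_of_subset {ν : Sym2 (Fin n) →₀ ℕ} (hν : ↑ν.support ⊆ G) :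
      ν ∈ f.support ↔ ν ∈ g.support := by
    rw [mem_support_iff, mem_support_iff, coeff_eq_coeff_of_sub_mem_span_X hfg hν]
  have degree_eq {ν : Sym2 (Fin n) →₀ ℕ} (hν : ν ∈ f.support) : ν.degree = d :=
    not_imp_comm.mp hf.coeff_eq_zero (mem_support_iff.mp hν)
  have hμf : μ ∈ f.support := (mem_support_iff_of_subset hμG).mpr hμ.1
  refine ⟨hμf, fun ν hν hne => ?_⟩
  by_cases hνG : ↑ν.support ⊆ G
  · exact hμ.2 ν ((mem_support_iff_of_subset hνG).mp hν) hne
  · exact degRevLexLT_of_not_support_subset hG ((degree_eq hν).trans (degree_eq hμf).symm) hνG hμG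

end LeadingMonomial

lemma IsGoodRank.rank_lt_rank {n : ℕ} {rank : Sym2 (Fin n) → ℕ} (hrank : IsGoodRank n rank) :
    ∀ v ∈ Dset n ∪ Uset n, ∀ w ∉ Dset n ∪ Uset n, rank v < rank w := by
  obtain ⟨-, hdiag, hstep, hfirst, hlast, hrest⟩ := hrank
  intro v hv w hw
  refine lt_of_lt_of_le ?_ (hrest w hw)
  rcases hv with ⟨i, rfl⟩ | ⟨i, j, rfl, hij | ⟨hi, hj⟩ | ⟨hi, hj⟩⟩
  · rw [hdiag]; omega
  · rw [hstep i j hij]; omega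
  · rw [hfirst i j hi hj]; omega
  · rw [hlast i j hi hj]; omega

section SymMinor

variable {K : Type*} [Field K] {n r s : ℕ}

lemma isHomogeneous_symMinor (A B : Fin s → Fin n) : (symMinor K A B).IsHomogeneous s := by
  simpa only [symMinor, Fintype.card_fin, mul_one] using!
    isHomogeneous_det fun i j => isHomogeneous_X K s(A i, B j)

lemma symMinor_sub_mul_monomial_mem_span_X (hrs : r ≤ s) {G : Set (Sym2 (Fin n))}
    {A B : Fin s → Fin n} (hupper : ∀ i j : Fin s, i < j → r ≤ (j : ℕ) → s(A i, B j) ∉ G) :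
    symMinor K A B -
        symMinor K (fun k : Fin r => A (Fin.castLE hrs k)) (fun k => B (Fin.castLE hrs k)) *
          monomial (∑ ℓ : Fin s with r ≤ ℓ.val, Finsupp.single s(A ℓ, B ℓ) 1) 1 ∈
      Ideal.span (X '' Gᶜ) := by
  let p : Fin s → Prop := fun ℓ => (ℓ : ℕ) < r
  let M : Matrix (Fin s) (Fin s) (MvPolynomial (Sym2 (Fin n)) K) :=
    Matrix.of fun i j => X s(A i, B j)
  have det_block : (M.toSquareBlockProp p).det =
      symMinor K (fun k : Fin r => A (Fin.castLE hrs k)) (fun k => B (Fin.castLE hrs k)) :=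
    (Matrix.det_submatrix_equiv_self (Fin.castLEOrderIso hrs).toEquiv _).symm
  have prod_diag : ∏ ℓ with ¬p ℓ, M ℓ ℓ =
      monomial (∑ ℓ : Fin s with r ≤ ℓ.val, Finsupp.single s(A ℓ, B ℓ) 1) 1 := by
    simp only [p, not_lt, monomial_sum_one]
    rfl
  rw [← det_block, ← prod_diag]
  exact det_sub_det_toSquareBlockProp_mul_prod_mem
    ((isLowerSet_Iio r).preimage Fin.val_strictMono.monotone)
    fun i j hij hj => Ideal.subset_span (Set.mem_image_of_mem X (hupper i j hij (not_lt.mp hj)))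

end SymMinor

theorem stmt1_general {K : Type*} [Field K] {n r s : ℕ} (hrs : r ≤ s)
    {rank : Sym2 (Fin n) → ℕ} {G : Set (Sym2 (Fin n))}
    (hG : ∀ v ∈ G, ∀ w ∉ G, rank v < rank w) {A B : Fin s → Fin n}
    (hdiag : ∀ ℓ : Fin s, r ≤ (ℓ : ℕ) → s(A ℓ, B ℓ) ∈ G)
    (hupper : ∀ i j : Fin s, i < j → r ≤ (j : ℕ) → s(A i, B j) ∉ G)
    {μ : Sym2 (Fin n) →₀ ℕ}
    (hμ : IsLeadingMonomial rank
      (symMinor K (fun k : Fin r => A (Fin.castLE hrs k)) (fun k => B (Fin.castLE hrs k))) μ)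
    (hμG : ↑μ.support ⊆ G) :
    IsLeadingMonomial rank (symMinor K A B)
      (μ + ∑ ℓ : Fin s with r ≤ ℓ.val, Finsupp.single s(A ℓ, B ℓ) 1) := by
  refine (hμ.mul_monomial _).of_sub_mem_span_X hG (isHomogeneous_symMinor A B)
    (symMinor_sub_mul_monomial_mem_span_X hrs hupper) ?_
  rw [← Finsupp.mem_supported ℕ] at hμG ⊢
  refine add_mem hμG (sum_mem fun ℓ hℓ => Finsupp.single_mem_supported ℕ 1 ?_)
  exact hdiag ℓ (Finset.mem_filter.mp hℓ).2

/-- **Lemma 3.2.** (Indices are 0-based: the first `r` positions carry the sequences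
`a_1,…,a_r` and `b_1,…,b_r`, the remaining positions carry `α_{r+1},…,α_s` and
`β_{r+1},…,β_s`.) Under the stated hypotheses,
`in_≺ [a_1,…,a_r,α_{r+1},…,α_s | b_1,…,b_r,β_{r+1},…,β_s]
  = in_≺ [a_1,…,a_r | b_1,…,b_r] · x_{α_{r+1} β_{r+1}} ⋯ x_{α_s β_s}`. -/
theorem stmt1 {K : Type*} [Field K] (n r s : ℕ) (hr : 1 ≤ r) (hrs : r ≤ s) (hs : s ≤ n - 2)
    (rank : Sym2 (Fin n) → ℕ) (hrank : IsGoodRank n rank)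
    (A B : Fin s → Fin n) (hA : Function.Injective A) (hB : Function.Injective B)
    (h1 : ∀ ℓ : Fin s, r ≤ (ℓ : ℕ) → s(A ℓ, B ℓ) ∈ Uset n)
    (h2 : ∀ i j : Fin s, (i : ℕ) < r → r ≤ (j : ℕ) →
      A i < B j ∧ s(A i, B j) ∉ Dset n ∪ Uset n)
    (h3 : ∀ i j : Fin s, r ≤ (i : ℕ) → i < j → s(A i, B j) ∉ Dset n ∪ Uset n)
    (μ : Sym2 (Fin n) →₀ ℕ)
    (hμ : IsLeadingMonomial rank
      (symMinor K (fun k : Fin r => A (Fin.castLE hrs k)) (fun k : Fin r => B (Fin.castLE hrs k))) μ)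
    (hμU : ↑μ.support ⊆ Uset n) :
    IsLeadingMonomial rank (symMinor K A B)
      (μ + ∑ ℓ ∈ Finset.univ.filter (fun ℓ : Fin s => r ≤ (ℓ : ℕ)),
        Finsupp.single s(A ℓ, B ℓ) 1) := by
  have hupper (i j : Fin s) (hij : i < j) (hj : r ≤ (j : ℕ)) : s(A i, B j) ∉ Dset n ∪ Uset n :=
    (lt_or_ge (i : ℕ) r).elim (fun hi => (h2 i j hi hj).2) fun hi => h3 i j hi hij
  exact stmt1_general hrs hrank.rank_lt_rank (fun ℓ hℓ => .inr (h1 ℓ hℓ)) hupper hμ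
    (hμU.trans Set.subset_union_right)
end

section
/- Let 1 ≤ s ≤ n-2 and let m be a squarefree monomial of degree s all of whose variables lie in D ∪ U, such that for every diagonal variable x_{ii} dividing m and every variable x_{hk} ∈ U dividing m one has i ≠ h and i ≠ k. Then m is the leading monomial, with respect to ≺, of some s×s minor of X; that is, there exist sequences a_1,…,a_s and b_1,…,b_s of indices in {1,…,n}, the a's pairwise distinct and the b's pairwise distinct, with in_≺([a_1,…,a_s | b_1,…,b_s]) = m. -/
open MvPolynomial

/-!
The variables in `U` are the edges of a Hamiltonian cycle on the indices and those in `D` are its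
loops, so `m` is a union of disjoint paths and of loops off these paths. Since `m` has degree at
most `n - 2`, there are two indices which carry no loop and whose incoming edge on the cycle is
missing from `m`. These cut the cycle into two intervals; orient the edges of `m` forward in one
and backward in the other, and take the tails as rows and the heads as columns.

Let another term of the minor stay within `D ∪ U`. Read as a flow on the cycle, it has the same
sources and sinks as `m`, so the two net flows differ by a constant. The first cut vertex is not a
column and the second is not a row, so at the edges entering them, where `m` has flow zero, the
new flow is `≤ 0` and `≥ 0` respectively. Hence the flows agree, the term contains all variables of
`m` in `U`, and it trades some of the loops of `m` for smaller variables. A term that leaves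
`D ∪ U` contains a variable smaller than all those of `m`.
-/

section LeadingMonomial

variable {n : ℕ} {rank : Sym2 (Fin n) → ℕ} {ι σ : Type*} [Fintype ι]

/-- The exponent vector of the monomial `∏ k, X (v k)`. -/
noncomputable def prodExponent (v : ι → σ) : σ →₀ ℕ := ∑ k, Finsupp.single (v k) 1

theorem prodExponent_apply [DecidableEq σ] (v : ι → σ) (w : σ) :
    prodExponent v w = (Finset.univ.filter fun k => v k = w).card := by
  simp [prodExponent, Finsupp.finsetSum_apply, Finsupp.single_apply]

theorem sum_prodExponent (v : ι → σ) :
    ((prodExponent v).sum fun _ e => e) = Fintype.card ι := by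
  change (prodExponent v).degree = _
  simp [prodExponent]

theorem prodExponent_equiv_coe {m : Finset σ} (e : ι ≃ m) :
    prodExponent (fun k => (e k : σ)) = ∑ v ∈ m, Finsupp.single v 1 := by
  rw [prodExponent, ← Finset.sum_coe_sort m, ← Equiv.sum_comp e]

theorem degRevLexLT_irrefl (μ : Sym2 (Fin n) →₀ ℕ) : ¬ DegRevLexLT rank μ μ := by
  simp [DegRevLexLT]

theorem degRevLexLT_of_le_of_lt {ν μ : Sym2 (Fin n) →₀ ℕ}
    (hdeg : (ν.sum fun _ e => e) = μ.sum fun _ e => e) {L : Set (Sym2 (Fin n))}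
    (hL : ∀ v ∈ L, ∀ w ∉ L, rank v < rank w)
    (hle : ∀ v ∉ L, μ v ≤ ν v) (hlt : ∃ v ∉ L, μ v < ν v) :
    DegRevLexLT rank ν μ := by
  obtain ⟨v, ⟨hvL, hv⟩, hmax⟩ :=
    (Set.toFinite {v | v ∉ L ∧ μ v < ν v}).exists_maximalFor rank _ hlt
  refine Or.inr ⟨hdeg, v, hv, fun w hw => ?_⟩
  have hwL : w ∉ L := fun h => hw.not_gt (hL w h v hvL)
  refine le_antisymm (not_lt.1 fun hlt => ?_) (hle w hwL)
  exact hw.not_ge (hmax ⟨hwL, hlt⟩ hw.le)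

theorem degRevLexLT_prodExponent {f g : ι → Sym2 (Fin n)} {L : Set (Sym2 (Fin n))}
    (hL : ∀ v ∈ L, ∀ w ∉ L, rank v < rank w)
    (hfg : ∀ k, g k ∉ L → f k = g k) (hlt : ∃ k, g k ∈ L ∧ f k ∉ L) :
    DegRevLexLT rank (prodExponent f) (prodExponent g) := by
  classical
  have hsub (v) (hv : v ∉ L) :
      (Finset.univ.filter fun k => g k = v) ⊆ Finset.univ.filter fun k => f k = v := by
    grind
  obtain ⟨k, hgk, hfk⟩ := hlt
  refine degRevLexLT_of_le_of_lt (by simp only [sum_prodExponent]) hL (fun v hv => ?_)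
    ⟨f k, hfk, ?_⟩ <;> simp only [prodExponent_apply]
  · exact Finset.card_le_card (hsub v hv)
  · exact Finset.card_lt_card
      ((Finset.ssubset_iff_of_subset (hsub _ hfk)).2 ⟨k, by simp, by grind⟩)

theorem symMinor_eq_sum (K : Type*) [Field K] {s : ℕ} (a b : Fin s → Fin n) :
    symMinor K a b = ∑ τ : Equiv.Perm (Fin s),
      monomial (prodExponent fun k => s(a (τ k), b k)) ((Equiv.Perm.sign τ : ℤ) : K) := by
  rw [symMinor, Matrix.det_apply']
  refine Finset.sum_congr rfl fun τ _ => ?_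
  rw [prodExponent, monomial_sum_index]
  simp [X]

theorem isLeadingMonomial_symMinor (K : Type*) [Field K] {s : ℕ} {a b : Fin s → Fin n}
    (h : ∀ τ : Equiv.Perm (Fin s), τ ≠ 1 → DegRevLexLT rank
      (prodExponent fun k => s(a (τ k), b k)) (prodExponent fun k => s(a k, b k))) :
    IsLeadingMonomial rank (symMinor K a b) (prodExponent fun k => s(a k, b k)) := by
  classical
  rw [symMinor_eq_sum]
  constructor
  · have hcoeff (τ : Equiv.Perm (Fin s)) (hτ : τ ≠ 1) :
        (prodExponent fun k => s(a (τ k), b k)) ≠ prodExponent fun k => s(a k, b k) :=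
      fun heq => degRevLexLT_irrefl _ (heq ▸ h τ hτ)
    rw [mem_support_iff, coeff_sum, Finset.sum_eq_single 1]
    · simp
    · exact fun τ _ hτ => by rw [coeff_monomial, if_neg (hcoeff τ hτ)]
    · simp
  · intro ν hν hne
    obtain ⟨τ, -, hτ⟩ := Finset.mem_biUnion.1 (support_sum hν)
    obtain rfl := Finset.mem_singleton.1 (support_monomial_subset hτ)
    exact h τ (by rintro rfl; exact hne rfl)

end LeadingMonomial

theorem zmod_one_add_one_ne_zero {n : ℕ} [Fact (2 < n)] : (1 + 1 : ZMod n) ≠ 0 := fun h =>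
  ZMod.neg_one_ne_one (neg_eq_of_add_eq_zero_left h)

theorem zmod_val_add_one {n : ℕ} [NeZero n] (i : ZMod n) :
    (i + 1).val = if i.val + 1 = n then 0 else i.val + 1 := by
  have hi := i.val_lt
  rw [ZMod.val_add, ZMod.val_one_eq_one_mod, Nat.add_mod_mod]
  split_ifs with h
  · rw [h, Nat.mod_self]
  · exact Nat.mod_eq_of_lt (by omega)

theorem exists_cut {n : ℕ} [NeZero n] {p q : ZMod n} (hpq : p ≠ q) :
    ∃ A : Set (ZMod n), p + 1 ∈ A ∧ q + 1 ∉ A ∧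
      ∀ i, i ≠ p → i ≠ q → (i ∈ A ↔ i + 1 ∈ A) := by
  refine ⟨{i | (i - (p + 1)).val < (q - p).val}, ?_, ?_, fun i hip hiq => ?_⟩
  · simpa [Nat.pos_iff_ne_zero, sub_eq_zero] using hpq.symm
  · simp
  · have val_succ := zmod_val_add_one (i - (p + 1))
    have val_ne_zero : (i - (p + 1) + 1).val ≠ 0 := by
      simpa [ZMod.val_eq_zero, sub_add_eq_sub_sub, sub_eq_zero] using hip
    have val_ne : (i - (p + 1) + 1).val ≠ (q - p).val := by
      simpa [(ZMod.val_injective n).eq_iff, sub_add_eq_sub_sub] using hiq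
    rw [Set.mem_ofPred_eq, Set.mem_ofPred_eq, sub_add_eq_add_sub] at *
    split_ifs at val_succ <;> omega

section Flow

variable {n : ℕ} {ι : Type*}

/-- `a` and `b` are equal or neighbours on the cycle `ZMod n`; under `zigzag` this says that the
variable `x_{ab}` lies in `D ∪ U`. -/
def IsStep (a b : ZMod n) : Prop := a = b ∨ b = a + 1 ∨ a = b + 1

/-- Every matching of the rows `r` with the columns `c` by steps of the cycle keeps the nontrivial
steps of the given matching `r k → c k`. -/
def IsRigid (r c : ι → ZMod n) : Prop :=
  ∀ τ : Equiv.Perm ι, (∀ k, IsStep (r (τ k)) (c k)) → ∀ k, r k ≠ c k → τ k = k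

/-- The signed number of passages of an arc `a → b` through the edge from `i` to `i + 1`. -/
def arcFlow (a b i : ZMod n) : ℤ :=
  (if a = i ∧ b = i + 1 then 1 else 0) - (if a = i + 1 ∧ b = i then 1 else 0)

/-- The total flow of the arcs `r k → c k` through the edge from `i` to `i + 1`. -/
def netFlow [Fintype ι] (r c : ι → ZMod n) (i : ZMod n) : ℤ := ∑ k, arcFlow (r k) (c k) i

theorem eq_of_forall_add_one_eq {α : Type*} {f : ZMod n → α} (hf : ∀ i, f (i + 1) = f i)
    (i j : ZMod n) : f i = f j := by
  have eq_zero (i : ZMod n) : f i = f 0 := by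
    obtain ⟨m, rfl⟩ := ZMod.intCast_surjective i
    simpa using (show Function.Periodic f 1 from hf).int_mul_eq m
  rw [eq_zero i, eq_zero j]

theorem arcFlow_add_one_sub_arcFlow [Fact (2 < n)] {a b : ZMod n} (h : IsStep a b) (i : ZMod n) :
    arcFlow a b (i + 1) - arcFlow a b i =
      (if a = i + 1 then 1 else 0) - (if b = i + 1 then 1 else 0) := by
  rcases h with rfl | rfl | rfl <;> grind [arcFlow, zmod_one_add_one_ne_zero (n := n)]

variable [Fintype ι] {r c : ι → ZMod n} {i : ZMod n}

theorem exists_forward_arc_of_netFlow_pos (h : 0 < netFlow r c i) :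
    ∃ k, r k = i ∧ c k = i + 1 := by
  contrapose! h
  exact Finset.sum_nonpos fun k _ => by grind [arcFlow]

theorem exists_backward_arc_of_netFlow_neg (h : netFlow r c i < 0) :
    ∃ k, r k = i + 1 ∧ c k = i := by
  contrapose! h
  exact Finset.sum_nonneg fun k _ => by grind [arcFlow]

theorem netFlow_add_one_sub_netFlow [Fact (2 < n)] (h : ∀ k, IsStep (r k) (c k)) (i : ZMod n) :
    netFlow r c (i + 1) - netFlow r c i =
      ∑ k, (if r k = i + 1 then 1 else 0) - ∑ k, (if c k = i + 1 then 1 else 0) := by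
  simp only [netFlow, ← Finset.sum_sub_distrib]
  exact Finset.sum_congr rfl fun k _ => arcFlow_add_one_sub_arcFlow (h k) i

theorem netFlow_comp_perm_sub_netFlow_eq [Fact (2 < n)] (h : ∀ k, IsStep (r k) (c k))
    {τ : Equiv.Perm ι} (hτ : ∀ k, IsStep (r (τ k)) (c k)) (i j : ZMod n) :
    netFlow (r ∘ τ) c i - netFlow r c i = netFlow (r ∘ τ) c j - netFlow r c j := by
  refine eq_of_forall_add_one_eq (f := fun i => netFlow (r ∘ τ) c i - netFlow r c i)
    (fun i => ?_) i j
  have hrows := Equiv.sum_comp τ fun k => if r k = i + 1 then (1 : ℤ) else 0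
  have hr := netFlow_add_one_sub_netFlow h i
  have hrτ := netFlow_add_one_sub_netFlow (r := r ∘ τ) hτ i
  simp only [Function.comp_apply] at hrτ
  linarith

theorem netFlow_comp_perm [Fact (2 < n)] {p q : ZMod n} (h : ∀ k, IsStep (r k) (c k))
    (hp : netFlow r c p = 0) (hcp : ∀ k, c k ≠ p + 1)
    (hq : netFlow r c q = 0) (hrq : ∀ k, r k ≠ q + 1)
    {τ : Equiv.Perm ι} (hτ : ∀ k, IsStep (r (τ k)) (c k)) :
    netFlow (r ∘ τ) c = netFlow r c := by
  have flow_p_le : netFlow (r ∘ τ) c p ≤ 0 := not_lt.1 fun hpos =>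
    let ⟨k, _, hk⟩ := exists_forward_arc_of_netFlow_pos hpos
    hcp k hk
  have flow_q_ge : 0 ≤ netFlow (r ∘ τ) c q := not_lt.1 fun hneg =>
    let ⟨k, hk, _⟩ := exists_backward_arc_of_netFlow_neg hneg
    hrq (τ k) hk
  funext i
  have hip := netFlow_comp_perm_sub_netFlow_eq h hτ i p
  have hiq := netFlow_comp_perm_sub_netFlow_eq h hτ i q
  omega

end Flow

/-- A loop or an edge of the cycle on `ZMod n`, indexing the variables in `D ∪ U`; `edge i` joins
`i` to `i + 1`. -/
inductive CycleEdge (n : ℕ)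
  | loop (i : ZMod n)
  | edge (i : ZMod n)

namespace CycleEdge

variable {n : ℕ}

open Classical in
/-- The starting point of `e` when `edge i` is oriented as `i → i + 1` for `i ∈ A` and as
`i + 1 → i` otherwise. -/
noncomputable def tail (A : Set (ZMod n)) : CycleEdge n → ZMod n
  | loop i => i
  | edge i => if i ∈ A then i else i + 1

/-- The end point of `e` in the orientation of `tail A`, which is the starting point in the opposite
orientation. -/
noncomputable def head (A : Set (ZMod n)) (e : CycleEdge n) : ZMod n := tail Aᶜ e

/-- No loop in `M` is attached to a vertex of an edge in `M`. -/
def LoopsIsolated (M : Set (CycleEdge n)) : Prop :=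
  ∀ ⦃i j⦄, loop i ∈ M → edge j ∈ M → i ≠ j ∧ i ≠ j + 1

/-- Any two consecutive edges in `M` are oriented by `A` in the same direction. -/
def IsCoherent (A : Set (ZMod n)) (M : Set (CycleEdge n)) : Prop :=
  ∀ ⦃i⦄, edge i ∈ M → edge (i + 1) ∈ M → (i ∈ A ↔ i + 1 ∈ A)

/-- `M` contains neither the edge entering `p + 1` from `p` nor the loop at `p + 1`, so that an
orientation can make `p + 1` the beginning of a path in `M`. -/
def IsGap (M : Set (CycleEdge n)) (p : ZMod n) : Prop := edge p ∉ M ∧ loop (p + 1) ∉ M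

variable {ι : Type*} {A : Set (ZMod n)} {M : Set (CycleEdge n)} {x : ι → CycleEdge n}

theorem isStep_tail_head (A : Set (ZMod n)) (e : CycleEdge n) : IsStep (tail A e) (head A e) := by
  cases e <;> grind [IsStep, tail, head]

theorem IsCoherent.compl (h : IsCoherent A M) : IsCoherent Aᶜ M :=
  fun _ hi hi' => not_congr (h hi hi')

theorem IsCoherent.injOn_tail (hA : IsCoherent A M) (hM : LoopsIsolated M) :
    Set.InjOn (tail A) M := by
  rintro (i | i) hi (j | j) hj hij <;> grind [tail, IsCoherent, LoopsIsolated]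

theorem IsCoherent.injective_tail (hA : IsCoherent A (Set.range x))
    (hM : LoopsIsolated (Set.range x)) (hx : Function.Injective x) :
    Function.Injective fun k => tail A (x k) :=
  fun k l h => hx (hA.injOn_tail hM ⟨k, rfl⟩ ⟨l, rfl⟩ h)

theorem IsCoherent.injective_head (hA : IsCoherent A (Set.range x))
    (hM : LoopsIsolated (Set.range x)) (hx : Function.Injective x) :
    Function.Injective fun k => head A (x k) :=
  hA.compl.injective_tail hM hx

theorem IsGap.head_ne {p : ZMod n} (hp : IsGap M p) (hpA : p + 1 ∈ A) {e : CycleEdge n}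
    (he : e ∈ M) : head A e ≠ p + 1 := by
  cases e <;> grind [head, tail, IsGap]

theorem IsGap.tail_ne {p : ZMod n} (hp : IsGap M p) (hpA : p + 1 ∉ A) {e : CycleEdge n}
    (he : e ∈ M) : tail A e ≠ p + 1 := by
  cases e <;> grind [tail, IsGap]

open Classical in
theorem arcFlow_tail_head [Fact (2 < n)] (A : Set (ZMod n)) (e : CycleEdge n) (i : ZMod n) :
    arcFlow (tail A e) (head A e) i = if e = edge i then (if i ∈ A then 1 else -1) else 0 := by
  cases e <;> grind [arcFlow, tail, head, zmod_one_add_one_ne_zero (n := n)]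

theorem exists_isGap_ne [Fintype ι] [NeZero n] (hx : Fintype.card ι + 2 ≤ n) :
    ∃ p q, p ≠ q ∧ IsGap (Set.range x) p ∧ IsGap (Set.range x) q := by
  let blocked : CycleEdge n → ZMod n
    | loop i => i - 1
    | edge i => i
  have isGap_of_notMem (p) (hp : p ∈ (Finset.univ.image (blocked ∘ x))ᶜ) :
      IsGap (Set.range x) p := by
    simp only [Finset.mem_compl, Finset.mem_image, Finset.mem_univ, true_and, not_exists] at hp
    constructor <;> rintro ⟨k, hk⟩ <;> exact hp k (by simp [hk, blocked])
  have one_lt_card : 1 < (Finset.univ.image (blocked ∘ x))ᶜ.card := by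
    have := Finset.card_image_le (s := Finset.univ) (f := blocked ∘ x)
    rw [Finset.card_univ] at this
    rw [Finset.card_compl, ZMod.card]
    omega
  obtain ⟨p, hp, q, hq, hpq⟩ := Finset.one_lt_card.1 one_lt_card
  exact ⟨p, q, hpq, isGap_of_notMem p hp, isGap_of_notMem q hq⟩

theorem IsGap.netFlow_eq_zero [Fintype ι] [Fact (2 < n)] {p : ZMod n}
    (hp : IsGap (Set.range x) p) (A : Set (ZMod n)) :
    netFlow (fun k => tail A (x k)) (fun k => head A (x k)) p = 0 :=
  Finset.sum_eq_zero fun k _ => by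
    rw [arcFlow_tail_head, if_neg fun hk => hp.1 ⟨k, hk⟩]

open Classical in
theorem netFlow_tail_head_of_eq_edge [Fintype ι] [Fact (2 < n)] (hx : Function.Injective x)
    {k : ι} {i : ZMod n} (hk : x k = edge i) (A : Set (ZMod n)) :
    netFlow (fun k => tail A (x k)) (fun k => head A (x k)) i = if i ∈ A then 1 else -1 := by
  simp only [netFlow, arcFlow_tail_head, ← hk, hx.eq_iff, Finset.sum_ite_eq', Finset.mem_univ,
    if_true]

theorem isRigid_tail_head [Finite ι] [Fact (2 < n)] (hx : Function.Injective x)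
    (hM : LoopsIsolated (Set.range x)) (hA : IsCoherent A (Set.range x)) {p q : ZMod n}
    (hp : IsGap (Set.range x) p) (hpA : p + 1 ∈ A)
    (hq : IsGap (Set.range x) q) (hqA : q + 1 ∉ A) :
    IsRigid (fun k => tail A (x k)) (fun k => head A (x k)) := by
  cases nonempty_fintype ι
  intro τ hτ k hk
  suffices ∃ l, tail A (x (τ l)) = tail A (x k) ∧ head A (x l) = head A (x k) by
    obtain ⟨l, htail, hhead⟩ := this
    obtain rfl := hA.injective_head hM hx hhead
    exact hA.injective_tail hM hx htail
  obtain ⟨i, hi⟩ : ∃ i, x k = edge i := by cases h : x k <;> grind [tail, head]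
  have flow_eq := congrFun (netFlow_comp_perm (fun k => isStep_tail_head A (x k))
    (hp.netFlow_eq_zero A) (fun k => hp.head_ne hpA ⟨k, rfl⟩)
    (hq.netFlow_eq_zero A) (fun k => hq.tail_ne hqA ⟨k, rfl⟩) hτ) i
  rw [netFlow_tail_head_of_eq_edge hx hi] at flow_eq
  by_cases hiA : i ∈ A
  · obtain ⟨l, hl⟩ := exists_forward_arc_of_netFlow_pos
      (flow_eq.trans_gt (by simp [hiA]))
    exact ⟨l, by simpa [hi, tail, head, hiA] using hl⟩
  · obtain ⟨l, hl⟩ := exists_backward_arc_of_netFlow_neg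
      (flow_eq.trans_lt (by simp [hiA]))
    exact ⟨l, by simpa [hi, tail, head, hiA] using hl⟩

theorem exists_isRigid [Fintype ι] [Fact (2 < n)] (hx : Function.Injective x)
    (hM : LoopsIsolated (Set.range x)) (hcard : Fintype.card ι + 2 ≤ n) :
    ∃ A, Function.Injective (fun k => tail A (x k)) ∧ Function.Injective (fun k => head A (x k)) ∧
      IsRigid (fun k => tail A (x k)) (fun k => head A (x k)) := by
  have : NeZero n := ⟨by omega⟩
  obtain ⟨p, q, hpq, hp, hq⟩ := exists_isGap_ne (x := x) hcard
  obtain ⟨A, hpA, hqA, hA⟩ := exists_cut hpq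
  have coherent : IsCoherent A (Set.range x) := fun i hi _ =>
    hA i (fun h => hp.1 (h ▸ hi)) (fun h => hq.1 (h ▸ hi))
  exact ⟨A, coherent.injective_tail hM hx, coherent.injective_head hM hx,
    isRigid_tail_head hx hM coherent hp hpA hq hqA⟩

end CycleEdge

theorem mk_mem_Uset_iff {n : ℕ} {a b : Fin n} :
    s(a, b) ∈ Uset n ↔
      ((b : ℕ) = a + 2 ∨ ((a : ℕ) = 0 ∧ (b : ℕ) = 1) ∨ ((a : ℕ) = n - 2 ∧ (b : ℕ) = n - 1)) ∨
      ((a : ℕ) = b + 2 ∨ ((b : ℕ) = 0 ∧ (a : ℕ) = 1) ∨ ((b : ℕ) = n - 2 ∧ (a : ℕ) = n - 1)) := by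
  simp only [Uset, Set.mem_ofPred_eq, Sym2.eq_iff]
  grind

section Zigzag

variable {n : ℕ} [NeZero n]

/-- The numbering of the indices along the cycle `0, 2, 4, …, 5, 3, 1`, whose edges are the
variables in `U`. -/
def zigzag (i : ZMod n) : Fin n :=
  ⟨if 2 * i.val < n then 2 * i.val else 2 * (n - 1 - i.val) + 1, by
    have := i.val_lt
    split_ifs <;> omega⟩

theorem zigzag_injective : Function.Injective (zigzag (n := n)) := by
  intro i j h
  have hi := i.val_lt
  have hj := j.val_lt
  simp only [zigzag, Fin.mk.injEq] at h
  apply ZMod.val_injective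
  split_ifs at h <;> omega

theorem zigzag_surjective : Function.Surjective (zigzag (n := n)) :=
  ((Fintype.bijective_iff_injective_and_card _).2 ⟨zigzag_injective, by simp [ZMod.card]⟩).2

theorem mk_zigzag_mem_Dset_iff {i j : ZMod n} : s(zigzag i, zigzag j) ∈ Dset n ↔ i = j := by
  rw [← zigzag_injective.eq_iff]
  simp only [Dset, Set.mem_ofPred_eq, Sym2.eq_iff]
  grind

theorem mk_zigzag_mem_Uset_iff {i j : ZMod n} :
    s(zigzag i, zigzag j) ∈ Uset n ↔ j = i + 1 ∨ i = j + 1 := by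
  have hi := i.val_lt
  have hj := j.val_lt
  simp only [mk_mem_Uset_iff, ← (ZMod.val_injective n).eq_iff, zmod_val_add_one, zigzag]
  split_ifs <;> grind

theorem mk_zigzag_mem_Dset_union_Uset_iff {i j : ZMod n} :
    s(zigzag i, zigzag j) ∈ Dset n ∪ Uset n ↔ IsStep i j :=
  or_congr mk_zigzag_mem_Dset_iff mk_zigzag_mem_Uset_iff

theorem degRevLexLT_of_isRigid {rank : Sym2 (Fin n) → ℕ}
    (hD : ∀ v ∈ Dset n, ∀ w ∉ Dset n, rank v < rank w)
    (hDU : ∀ v ∈ Dset n ∪ Uset n, ∀ w ∉ Dset n ∪ Uset n, rank v < rank w)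
    {ι : Type*} [Fintype ι] {r c : ι → ZMod n} (hr : Function.Injective r)
    (h : ∀ k, IsStep (r k) (c k)) (hrc : IsRigid r c) {τ : Equiv.Perm ι} (hτ : τ ≠ 1) :
    DegRevLexLT rank (prodExponent fun k => s(zigzag (r (τ k)), zigzag (c k)))
      (prodExponent fun k => s(zigzag (r k), zigzag (c k))) := by
  by_cases hsteps : ∀ k, IsStep (r (τ k)) (c k)
  · obtain ⟨k, hk⟩ := DFunLike.ne_iff.1 hτ
    have loop_at_k : r k = c k := by_contra fun hne => hk (hrc τ hsteps k hne)
    refine degRevLexLT_prodExponent hD (fun l hl => ?_)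
      ⟨k, mk_zigzag_mem_Dset_iff.2 loop_at_k, ?_⟩
    · rw [hrc τ hsteps l (mt mk_zigzag_mem_Dset_iff.2 hl)]
    · rw [mk_zigzag_mem_Dset_iff, ← loop_at_k]
      exact hr.ne hk
  · obtain ⟨k, hk⟩ := not_forall.1 hsteps
    have mem_DU (l) := mk_zigzag_mem_Dset_union_Uset_iff.2 (h l)
    exact degRevLexLT_prodExponent hDU (fun l hl => absurd (mem_DU l) hl)
      ⟨k, mem_DU k, mt mk_zigzag_mem_Dset_union_Uset_iff.1 hk⟩

/-- The variable of the generic symmetric matrix attached to a loop or an edge of the cycle. -/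
def CycleEdge.toVar : CycleEdge n → Sym2 (Fin n)
  | loop i => s(zigzag i, zigzag i)
  | edge i => s(zigzag i, zigzag (i + 1))

theorem CycleEdge.mk_zigzag_tail_head (A : Set (ZMod n)) (e : CycleEdge n) :
    s(zigzag (tail A e), zigzag (head A e)) = e.toVar := by
  cases e <;> grind [tail, head, toVar]

theorem CycleEdge.exists_toVar_eq {v : Sym2 (Fin n)} (hv : v ∈ Dset n ∪ Uset n) :
    ∃ e : CycleEdge n, e.toVar = v := by
  induction v with | h a b
  obtain ⟨i, rfl⟩ := zigzag_surjective a
  obtain ⟨j, rfl⟩ := zigzag_surjective b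
  obtain rfl | rfl | rfl := mk_zigzag_mem_Dset_union_Uset_iff.1 hv
  · exact ⟨loop i, rfl⟩
  · exact ⟨edge i, rfl⟩
  · exact ⟨edge j, Sym2.eq_swap⟩

theorem CycleEdge.loopsIsolated_of_toVar_mem {M : Set (CycleEdge n)} {m : Finset (Sym2 (Fin n))}
    (hM : ∀ e ∈ M, e.toVar ∈ m)
    (hsep : ∀ i j k : Fin n, s(i, i) ∈ m → s(j, k) ∈ m → s(j, k) ∈ Uset n → i ≠ j ∧ i ≠ k) :
    LoopsIsolated M := fun i j hi hj => by
  have h := hsep (zigzag i) (zigzag j) (zigzag (j + 1)) (hM _ hi) (hM _ hj)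
    (mk_zigzag_mem_Uset_iff.2 (Or.inl rfl))
  exact ⟨ne_of_apply_ne zigzag h.1, ne_of_apply_ne zigzag h.2⟩

end Zigzag

namespace IsGoodRank

variable {n : ℕ} {rank : Sym2 (Fin n) → ℕ} {v w : Sym2 (Fin n)}

theorem rank_lt_iff_mem_Dset (h : IsGoodRank n rank) : rank v < n ↔ v ∈ Dset n := by
  obtain ⟨-, hD, hU₁, hU₂, hU₃, hrest⟩ := h
  refine ⟨fun hv => ?_, ?_⟩
  · by_contra hvD
    by_cases hvU : v ∈ Uset n
    · obtain ⟨i, j, rfl, hij | ⟨hi, hj⟩ | ⟨hi, hj⟩⟩ := hvU <;> grind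
    · grind [hrest v (by simp [hvD, hvU])]
  · rintro ⟨i, rfl⟩
    exact (hD i).trans_lt i.2

theorem rank_lt_two_mul (h : IsGoodRank n rank) (hv : v ∈ Dset n ∪ Uset n) :
    rank v < 2 * n := by
  rcases hv with hvD | ⟨i, j, rfl, hij | ⟨hi, hj⟩ | ⟨hi, hj⟩⟩
  · have := h.rank_lt_iff_mem_Dset.2 hvD
    omega
  · grind [h.2.2.1 i j hij]
  · grind [h.2.2.2.1 i j hi hj]
  · grind [h.2.2.2.2.1 i j hi hj]

theorem rank_lt_of_mem_Dset (h : IsGoodRank n rank) (hv : v ∈ Dset n) (hw : w ∉ Dset n) :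
    rank v < rank w :=
  (h.rank_lt_iff_mem_Dset.2 hv).trans_le (not_lt.1 (mt h.rank_lt_iff_mem_Dset.1 hw))

theorem rank_lt_of_mem_Dset_union_Uset (h : IsGoodRank n rank) (hv : v ∈ Dset n ∪ Uset n)
    (hw : w ∉ Dset n ∪ Uset n) : rank v < rank w :=
  (h.rank_lt_two_mul hv).trans_le (h.2.2.2.2.2 w hw)

end IsGoodRank

theorem stmt6_general {K : Type*} [Field K] (n s : ℕ) (hs1 : 1 ≤ s) (hs2 : s ≤ n - 2)
    (rank : Sym2 (Fin n) → ℕ) (hD : ∀ v ∈ Dset n, ∀ w ∉ Dset n, rank v < rank w)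
    (hDU : ∀ v ∈ Dset n ∪ Uset n, ∀ w ∉ Dset n ∪ Uset n, rank v < rank w)
    (m : Finset (Sym2 (Fin n))) (hcard : m.card = s) (hm : ↑m ⊆ Dset n ∪ Uset n)
    (hsep : ∀ i j k : Fin n, s(i, i) ∈ m → s(j, k) ∈ m → s(j, k) ∈ Uset n → i ≠ j ∧ i ≠ k) :
    ∃ a b : Fin s → Fin n, Function.Injective a ∧ Function.Injective b ∧
      IsLeadingMonomial rank (symMinor K a b) (∑ v ∈ m, Finsupp.single v 1) := by
  have : NeZero n := ⟨by omega⟩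
  have : Fact (2 < n) := ⟨by omega⟩
  let variableEquiv : Fin s ≃ m := (Finset.equivFinOfCardEq hcard).symm
  choose x hx using fun k => CycleEdge.exists_toVar_eq (hm (variableEquiv k).2)
  have x_injective : Function.Injective x := fun k l h =>
    variableEquiv.injective (Subtype.ext (by rw [← hx, ← hx, h]))
  have isolated : CycleEdge.LoopsIsolated (Set.range x) :=
    CycleEdge.loopsIsolated_of_toVar_mem
      (Set.forall_mem_range.2 fun k => hx k ▸ (variableEquiv k).2) hsep
  obtain ⟨A, tail_injective, head_injective, rigid⟩ :=
    CycleEdge.exists_isRigid x_injective isolated (by rw [Fintype.card_fin]; omega)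
  refine ⟨fun k => zigzag ((x k).tail A), fun k => zigzag ((x k).head A),
    zigzag_injective.comp tail_injective, zigzag_injective.comp head_injective, ?_⟩
  rw [← prodExponent_equiv_coe variableEquiv]
  simp only [← hx, ← CycleEdge.mk_zigzag_tail_head A]
  exact isLeadingMonomial_symMinor K fun τ hτ =>
    degRevLexLT_of_isRigid hD hDU tail_injective (fun k => (x k).isStep_tail_head A) rigid hτ

/-- **Proposition 3.7.** A squarefree monomial of degree `s` (encoded by its support,
a finset `m` of variables of cardinality `s`) all of whose variables lie in `D ∪ U`,
such that no diagonal variable `x_{ii}` dividing `m` shares the index `i` with a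
row or column index of a variable of `U` dividing `m`, is the leading monomial of an
`s`-minor of the generic symmetric matrix `X`. -/
theorem stmt6 {K : Type*} [Field K] (n s : ℕ) (hs1 : 1 ≤ s) (hs2 : s ≤ n - 2)
    (rank : Sym2 (Fin n) → ℕ) (hrank : IsGoodRank n rank)
    (m : Finset (Sym2 (Fin n))) (hcard : m.card = s)
    (hDU : ↑m ⊆ Dset n ∪ Uset n)
    (hsep : ∀ i j k : Fin n, s(i, i) ∈ m → s(j, k) ∈ m → s(j, k) ∈ Uset n →
      i ≠ j ∧ i ≠ k) :
    ∃ a b : Fin s → Fin n, Function.Injective a ∧ Function.Injective b ∧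
      IsLeadingMonomial rank (symMinor K a b)
        (∑ v ∈ m, Finsupp.single v 1) := by
  exact stmt6_general n s hs1 hs2 rank (fun _ hv _ hw => hrank.rank_lt_of_mem_Dset hv hw)
    (fun _ hv _ hw => hrank.rank_lt_of_mem_Dset_union_Uset hv hw) m hcard hDU hsep
end
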